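/- Let n ≥ 9. The stabilizer problem is already undecidable over the integers: there is no computable function which, given as input a finite list X of matrices in GL_n(ℤ) together with a vector u ∈ ℤⁿ, decides whether some non-identity element of the subgroup ⟨X⟩ of GL_n(ℤ) generated by X fixes u. -/

import Mathlib

/-- Integer matrices are primcodable (natural effective encoding of matrices). -/
noncomputable instance matZPrimcodable (n : ℕ) :
    Primcodable (Matrix (Fin n) (Fin n) ℤ) :=
  Primcodable.finArrow

/-- A deterministic machine whose configurations consist of a state and a tuple of integers, and
which at each step rewrites one entry, by an affine map that depends on the state and on the residue
of the entry. -/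
structure ModularMachine (K Q : Type*) where
  /-- The entry which is rewritten. -/
  key : Q → K
  /-- The modulus. -/
  modulus : ℤ
  /-- The next state, depending on the residue. -/
  next : Q → ℤ → Q
  /-- The slope of the affine map. -/
  coeff : Q → ℤ → ℤ
  /-- The constant term of the affine map. -/
  offset : Q → ℤ → ℤ
  modulus_pos : 0 < modulus
  offset_nonneg : ∀ q d, 0 ≤ d → 0 ≤ offset q d
  offset_lt : ∀ q d, d < modulus → offset q d < coeff q d

namespace ModularMachine

variable {K Q : Type*} [DecidableEq K] (M : ModularMachine K Q)

/-- One step of a modular machine. -/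
def step (s : Q × (K → ℤ)) : Q × (K → ℤ) :=
  (M.next s.1 (s.2 (M.key s.1) % M.modulus),
    Function.update s.2 (M.key s.1)
      (M.coeff s.1 (s.2 (M.key s.1) % M.modulus) * (s.2 (M.key s.1) / M.modulus) +
        M.offset s.1 (s.2 (M.key s.1) % M.modulus)))

/-- The configuration `h` is reached from `s`. -/
def Reach (s h : Q × (K → ℤ)) : Prop := ∃ n, M.step^[n] s = h

variable {M}

theorem reach_step_iff {s h : Q × (K → ℤ)} (hh : M.step h = h) :
    M.Reach (M.step s) h ↔ M.Reach s h := by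
  constructor
  · rintro ⟨n, hn⟩
    exact ⟨n + 1, hn⟩
  · rintro ⟨n, hn⟩
    refine ⟨n, ?_⟩
    rw [← Function.iterate_succ_apply, Function.iterate_succ_apply', hn, hh]

theorem reach_iterate_iff {s h : Q × (K → ℤ)} (hh : M.step h = h) (n : ℕ) :
    M.Reach (M.step^[n] s) h ↔ M.Reach s h := by
  induction n generalizing s with
  | zero => rfl
  | succ n ih => rw [Function.iterate_succ_apply, ih, reach_step_iff hh]

/-- Restriction of a modular machine to a set of states that is closed under the transitions. -/
def restrict (M : ModularMachine K Q) (F : Set Q) (hF : ∀ q ∈ F, ∀ d, M.next q d ∈ F) :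
    ModularMachine K F where
  key q := M.key q
  modulus := M.modulus
  next q d := ⟨M.next q d, hF q q.2 d⟩
  coeff q d := M.coeff q d
  offset q d := M.offset q d
  modulus_pos := M.modulus_pos
  offset_nonneg q d := M.offset_nonneg q d
  offset_lt q d := M.offset_lt q d

theorem restrict_iterate (F : Set Q) (hF : ∀ q ∈ F, ∀ d, M.next q d ∈ F) (n : ℕ)
    (s : F × (K → ℤ)) :
    (Prod.map Subtype.val id ((M.restrict F hF).step^[n] s) : Q × (K → ℤ)) =
      M.step^[n] (Prod.map Subtype.val id s) :=
  (Function.Semiconj.iterate_right (f := Prod.map Subtype.val id) (fun _ => rfl) n) s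

theorem restrict_reach_iff (F : Set Q) (hF : ∀ q ∈ F, ∀ d, M.next q d ∈ F)
    (s h : F × (K → ℤ)) :
    (M.restrict F hF).Reach s h ↔
      M.Reach (Prod.map Subtype.val id s) (Prod.map Subtype.val id h) := by
  have inj : Function.Injective (Prod.map Subtype.val id : F × (K → ℤ) → Q × (K → ℤ)) :=
    Subtype.val_injective.prodMap Function.injective_id
  exact exists_congr fun n => by rw [← restrict_iterate, inj.eq_iff]

end ModularMachine

namespace StackSimulation

open Turing Turing.PartrecToTM2

/-- Statements of the stack machines that evaluate partial recursive functions. -/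
abbrev St := TM2.Stmt (fun _ : K' => Γ') Λ' (Option Γ')

/-- The nonzero digit of a stack symbol. -/
def digit : Γ' → ℤ
  | .consₗ => 1
  | .cons => 2
  | .bit0 => 3
  | .bit1 => 4

/-- The stack symbol of a digit; the digit `0` represents an empty stack. -/
def symbol (d : ℤ) : Option Γ' :=
  if d = 1 then some .consₗ else if d = 2 then some .cons else if d = 3 then some .bit0
  else if d = 4 then some .bit1 else none

/-- A stack as an integer in base five. -/
def code : List Γ' → ℤ
  | [] => 0
  | a :: l => 5 * code l + digit a

theorem digit_bounds (a : Γ') : 0 < digit a ∧ digit a < 5 := by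
  cases a <;> simp [digit]

theorem digit_mod (a : Γ') (u : ℤ) : (5 * u + digit a) % 5 = digit a := by
  cases a <;> simp only [digit] <;> omega

theorem digit_div (a : Γ') (u : ℤ) : (5 * u + digit a) / 5 = u := by
  cases a <;> simp only [digit] <;> omega

theorem digit_ne_zero (a : Γ') : digit a ≠ 0 := by
  cases a <;> simp [digit]

theorem symbol_digit (a : Γ') : symbol (digit a) = some a := by
  cases a <;> rfl

theorem symbol_code (l : List Γ') : symbol (code l % 5) = l.head? := by
  cases l with
  | nil => rfl
  | cons a l => rw [code, digit_mod, symbol_digit, List.head?_cons]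

/-- Execution of one elementary instruction on stacks coded by integers. -/
def micro : ModularMachine K' (Option St × Option Γ') where
  key s := match s.1 with
    | some (.push k _ _) => k
    | some (.peek k _ _) => k
    | some (.pop k _ _) => k
    | _ => .main
  modulus := 5
  next s d := match s.1 with
    | some (.push _ _ q) => (some q, s.2)
    | some (.peek _ f q) => (some q, f s.2 (symbol d))
    | some (.pop _ f q) => (some q, f s.2 (symbol d))
    | some (.load f q) => (some q, f s.2)
    | some (.branch f q₁ q₂) => (some (cond (f s.2) q₁ q₂), s.2)
    | some (.goto f) => (some (tr (f s.2)), s.2)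
    | some .halt => (none, s.2)
    | none => (none, s.2)
  coeff s d := match s.1 with
    | some (.push _ _ _) => 25
    | some (.pop _ _ _) => if d = 0 then 5 else 1
    | _ => 5
  offset s d := match s.1 with
    | some (.push _ f _) => 5 * d + digit (f s.2)
    | some (.pop _ _ _) => 0
    | _ => d
  modulus_pos := by norm_num
  offset_nonneg := by
    rintro ⟨_ | (⟨_, f, _⟩ | _ | _ | _ | _ | _ | _), v⟩ d hd <;> try exact hd
    · have := (digit_bounds (f v)).1
      simp only
      omega
    · exact le_rfl
  offset_lt := by
    rintro ⟨_ | (⟨_, f, _⟩ | _ | _ | _ | _ | _ | _), v⟩ d hd <;> try exact hd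
    · have := (digit_bounds (f v)).2
      simp only
      omega
    · simp only
      split_ifs <;> norm_num

theorem update_div_mod (w : K' → ℤ) (k : K') :
    Function.update w k (5 * (w k / 5) + w k % 5) = w := by
  rw [Int.mul_ediv_add_emod, Function.update_eq_self]

theorem micro_push (k : K') (f : Option Γ' → Γ') (q : St) (v : Option Γ') (S : K' → List Γ') :
    micro.step ((some (.push k f q), v), fun k => code (S k)) =
      ((some q, v), fun i => code (Function.update S k (f v :: S k) i)) := by
  refine Prod.ext rfl (funext fun i => ?_)
  rcases eq_or_ne i k with rfl | h
  · simp only [ModularMachine.step, micro, Function.update_self, code]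
    omega
  · simp [ModularMachine.step, micro, h]

theorem micro_peek (k : K') (f : Option Γ' → Option Γ' → Option Γ') (q : St) (v : Option Γ')
    (S : K' → List Γ') :
    micro.step ((some (.peek k f q), v), fun k => code (S k)) =
      ((some q, f v (S k).head?), fun i => code (S i)) := by
  rw [← symbol_code]
  exact Prod.ext rfl (update_div_mod _ _)

theorem micro_pop (k : K') (f : Option Γ' → Option Γ' → Option Γ') (q : St) (v : Option Γ')
    (S : K' → List Γ') :
    micro.step ((some (.pop k f q), v), fun k => code (S k)) =
      ((some q, f v (S k).head?), fun i => code (Function.update S k (S k).tail i)) := by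
  rw [← symbol_code]
  refine Prod.ext rfl (funext fun i => ?_)
  rcases eq_or_ne i k with rfl | h
  · simp only [ModularMachine.step, micro, Function.update_self]
    cases S i with
    | nil => rfl
    | cons a l =>
      simp only [code, digit_mod, digit_div, if_neg (digit_ne_zero a), List.tail_cons]
      ring
  · simp [ModularMachine.step, micro, h]

theorem micro_load (f : Option Γ' → Option Γ') (q : St) (v : Option Γ') (w : K' → ℤ) :
    micro.step ((some (.load f q), v), w) = ((some q, f v), w) :=
  Prod.ext rfl (update_div_mod _ _)

theorem micro_branch (f : Option Γ' → Bool) (q₁ q₂ : St) (v : Option Γ') (w : K' → ℤ) :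
    micro.step ((some (.branch f q₁ q₂), v), w) = ((some (cond (f v) q₁ q₂), v), w) :=
  Prod.ext rfl (update_div_mod _ _)

/-- The coding of configurations. -/
def codeCfg (c : Cfg') : (Option St × Option Γ') × (K' → ℤ) :=
  ((c.l.map tr, c.var), fun k => code (c.stk k))

theorem exists_micro_iterate (q : St) (v : Option Γ') (S : K' → List Γ') :
    ∃ n, micro.step^[n + 1] ((some q, v), fun k => code (S k)) =
      codeCfg (TM2.stepAux q v S) := by
  induction q generalizing v S with
  | push k f q ih =>
    obtain ⟨n, hn⟩ := ih v (Function.update S k (f v :: S k))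
    exact ⟨n + 1, by rw [Function.iterate_succ_apply, micro_push, hn]; rfl⟩
  | peek k f q ih =>
    obtain ⟨n, hn⟩ := ih (f v (S k).head?) S
    exact ⟨n + 1, by rw [Function.iterate_succ_apply, micro_peek, hn]; rfl⟩
  | pop k f q ih =>
    obtain ⟨n, hn⟩ := ih (f v (S k).head?) (Function.update S k (S k).tail)
    exact ⟨n + 1, by rw [Function.iterate_succ_apply, micro_pop, hn]; rfl⟩
  | load f q ih =>
    obtain ⟨n, hn⟩ := ih (f v) S
    exact ⟨n + 1, by rw [Function.iterate_succ_apply, micro_load, hn]; rfl⟩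
  | branch f q₁ q₂ ih₁ ih₂ =>
    have key : ∃ n, micro.step^[n + 1] ((some (cond (f v) q₁ q₂), v), fun k => code (S k)) =
        codeCfg (TM2.stepAux (.branch f q₁ q₂) v S) := by
      rw [TM2.stepAux]
      cases f v
      · exact ih₂ v S
      · exact ih₁ v S
    obtain ⟨n, hn⟩ := key
    exact ⟨n + 1, by rw [Function.iterate_succ_apply, micro_branch, hn]⟩
  | goto f => exact ⟨0, Prod.ext rfl (update_div_mod _ _)⟩
  | halt => exact ⟨0, Prod.ext rfl (update_div_mod _ _)⟩

theorem micro_halted (v : Option Γ') (w : K' → ℤ) :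
    micro.step ((none, v), w) = ((none, v), w) :=
  Prod.ext rfl (update_div_mod _ _)

theorem reach_of_reaches {c c' : Cfg'} (h : StateTransition.Reaches (TM2.step tr) c c')
    (hc' : c'.l = none) : micro.Reach (codeCfg c) (codeCfg c') := by
  have halted : micro.step (codeCfg c') = codeCfg c' := by
    rw [codeCfg, hc']
    exact micro_halted _ _
  induction h using Relation.ReflTransGen.head_induction_on with
  | refl => exact ⟨0, rfl⟩
  | head hstep _ ih =>
    rename_i a a' _
    obtain ⟨_ | l, v, S⟩ := a
    · cases hstep
    · obtain ⟨n, hn⟩ := exists_micro_iterate (tr l) v S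
      rw [← ModularMachine.reach_iterate_iff halted (n + 1)]
      obtain rfl := Option.some.inj hstep
      exact hn ▸ ih

theorem exists_reaches_of_iterate {h : (Option St × Option Γ') × (K' → ℤ)}
    (hh : micro.step h = h) (hnone : h.1.1 = none) (n : ℕ) (c : Cfg')
    (hn : micro.step^[n] (codeCfg c) = h) :
    ∃ c', StateTransition.Reaches (TM2.step tr) c c' ∧ c'.l = none := by
  induction n using Nat.strong_induction_on generalizing c with
  | _ n ih =>
    obtain ⟨_ | l, v, S⟩ := c
    · exact ⟨_, .refl, rfl⟩
    · obtain ⟨m, hm⟩ := exists_micro_iterate (tr l) v S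
      have first : StateTransition.Reaches (TM2.step tr) ⟨some l, v, S⟩
          (TM2.stepAux (tr l) v S) := .single rfl
      rcases le_or_gt (m + 1) n with hle | hlt
      · obtain ⟨k, rfl⟩ := Nat.exists_eq_add_of_le' hle
        rw [Function.iterate_add_apply] at hn
        obtain ⟨c', hc', hl⟩ := ih k (by omega) (TM2.stepAux (tr l) v S)
          (by rw [← hm]; exact hn)
        exact ⟨c', first.trans hc', hl⟩
      · refine ⟨_, first, ?_⟩
        obtain ⟨k, hk⟩ := Nat.exists_eq_add_of_le' hlt.le
        rw [hk, Function.iterate_add_apply] at hm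
        have : codeCfg (TM2.stepAux (tr l) v S) = h := by
          rw [← hm]
          exact (congrArg _ hn).trans (Function.iterate_fixed hh k)
        have hl := congrArg (fun s => s.1.1) this
        simp only [codeCfg, hnone] at hl
        exact Option.map_eq_none_iff.1 hl

theorem micro_next_mem {S : Finset Λ'} (hS : ∀ l ∈ S, TM2.SupportsStmt S (tr l))
    (s : Option St × Option Γ') (hs : s.1 ∈ TM2.stmts tr S) (d : ℤ) :
    (micro.next s d).1 ∈ TM2.stmts tr S := by
  classical
  obtain ⟨_ | q, v⟩ := s
  · exact hs
  · have sub {q' : St} (h : q' ∈ TM2.stmts₁ q) : some q' ∈ TM2.stmts tr S :=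
      TM2.stmts_trans h hs
    have supp : TM2.SupportsStmt S q := by
      have hs' := hs
      simp only [TM2.stmts, Finset.mem_insertNone, Finset.mem_biUnion, Option.mem_def,
        Option.some.injEq, forall_eq'] at hs'
      obtain ⟨l, hl, hq⟩ := hs'
      exact TM2.stmts₁_supportsStmt_mono hq (hS l hl)
    cases q with
    | push | peek | pop | load =>
      exact sub (by simp [TM2.stmts₁, TM2.stmts₁_self])
    | branch f q₁ q₂ =>
      simp only [micro]
      cases f v
      · exact sub (by simp [TM2.stmts₁, TM2.stmts₁_self])
      · exact sub (by simp [TM2.stmts₁, TM2.stmts₁_self])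
    | goto f =>
      change some (tr (f v)) ∈ TM2.stmts tr S
      exact Finset.some_mem_insertNone.2 (Finset.mem_biUnion.2 ⟨_, supp v, TM2.stmts₁_self⟩)
    | halt =>
      simp [micro, TM2.stmts]

end StackSimulation

namespace StackSimulation

open Turing Turing.PartrecToTM2

/-- The code of the stack that represents the one-element list `[n]`. -/
def inputCode (n : ℕ) : ℕ :=
  if h : n = 0 then 2
  else 5 * inputCode (n / 2) + (3 + n % 2)
decreasing_by omega

theorem inputCode_zero : inputCode 0 = 2 := by
  rw [inputCode]
  rfl

theorem inputCode_of_ne_zero {n : ℕ} (h : n ≠ 0) :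
    inputCode n = 5 * inputCode (n / 2) + (3 + n % 2) := by
  rw [inputCode, dif_neg h]

theorem computable_inputCode : Computable inputCode := by
  have step : Primrec₂ fun (_ : Unit) (L : List ℕ) =>
      if L.length = 0 then some 2
      else (L[L.length / 2]?).map fun a => 5 * a + (3 + L.length % 2) := by
    refine Primrec.ite (Primrec.eq.comp (Primrec.list_length.comp .snd) (.const 0))
      (.const (some 2)) (Primrec.option_map ?_ ?_)
    · exact Primrec.list_getElem?.comp .snd
        (Primrec.nat_div.comp (Primrec.list_length.comp .snd) (.const 2))
    · exact Primrec.nat_add.comp (Primrec.nat_mul.comp (.const 5) .snd)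
        (Primrec.nat_add.comp (.const 3)
          (Primrec.nat_mod.comp (Primrec.list_length.comp (Primrec.snd.comp .fst)) (.const 2)))
  have h := Primrec.nat_strong_rec (fun (_ : Unit) n => inputCode n) step fun _ n => by
    rcases Nat.eq_zero_or_pos n with rfl | hn
    · simp [inputCode_zero]
    · have : n / 2 < n := by omega
      simp [hn.ne', this, inputCode_of_ne_zero hn.ne']
  exact (h.comp (.const ()) .id).to_comp

theorem code_trPosNum (p : PosNum) :
    code (trPosNum p ++ [Γ'.cons]) = inputCode p := by
  induction p with
  | one =>
    rw [PosNum.cast_one', inputCode_of_ne_zero one_ne_zero, show 1 / 2 = 0 from rfl,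
      inputCode_zero]
    simp [trPosNum, code, digit]
  | bit0 p ih =>
    have hp : 0 < (p : ℕ) := PosNum.cast_pos p
    rw [PosNum.cast_bit0, inputCode_of_ne_zero (by omega),
      show ((p : ℕ) + p) / 2 = p by omega, show ((p : ℕ) + p) % 2 = 0 by omega]
    simp [trPosNum, code, digit, ih]
  | bit1 p ih =>
    rw [PosNum.cast_bit1, inputCode_of_ne_zero (by omega),
      show ((p : ℕ) + p + 1) / 2 = p by omega, show ((p : ℕ) + p + 1) % 2 = 1 by omega]
    simp [trPosNum, code, digit, ih]

theorem code_trList_singleton (n : ℕ) : code (trList [n]) = inputCode n := by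
  simp only [trList, trNat]
  cases h : (n : Num) with
  | zero =>
    obtain rfl : n = 0 := by
      rw [← Num.to_of_nat n, h]
      rfl
    rw [inputCode_zero]
    rfl
  | pos p =>
    obtain rfl : n = (p : ℕ) := by
      rw [← Num.to_of_nat n, h]
      rfl
    exact code_trPosNum p

theorem elim_comp_code (l : List Γ') :
    (fun k => code (K'.elim l [] [] [] k)) = Pi.single K'.main (code l) := by
  funext k
  cases k <;> simp [K'.elim, code]

theorem exists_machine : ∃ (Q : Type) (_ : Finite Q) (M : ModularMachine K' Q) (q₀ q₁ : Q)
    (j : ℕ → ℕ) (e : ℤ), Computable j ∧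
      M.step (q₁, Pi.single K'.main e) = (q₁, Pi.single K'.main e) ∧
      ¬ ComputablePred fun n =>
        M.Reach (q₀, Pi.single K'.main (j n : ℤ)) (q₁, Pi.single K'.main e) := by
  have hpart : Partrec fun n => ((Nat.Partrec.Code.eval (Denumerable.ofNat _ n) 0).map
      fun _ => 0 : Part ℕ) :=
    (Nat.Partrec.Code.eval_part.comp (Computable.ofNat _) (.const 0)).map (Computable.const 0).to₂
  classical
  obtain ⟨c, hc⟩ := ToPartrec.Code.exists_code (Nat.Partrec'.part_iff₁.2 hpart)
  let S := codeSupp c Cont'.halt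
  have hS : ∀ l ∈ S, TM2.SupportsStmt S (tr l) := (tr_supports c Cont'.halt).2
  let F : Set (Option St × Option Γ') := {s | s.1 ∈ TM2.stmts tr S}
  have hfin : F.Finite :=
    ((TM2.stmts tr S).finite_toSet.prod Set.finite_univ).subset fun s hs => ⟨hs, trivial⟩
  have h₀ : ((some (tr (trNormal c Cont'.halt)), none) : Option St × Option Γ') ∈ F :=
    Finset.some_mem_insertNone.2 (Finset.mem_biUnion.2
      ⟨_, codeSupp_self _ _ (trStmts₁_self _), TM2.stmts₁_self⟩)
  have h₁ : ((none, none) : Option St × Option Γ') ∈ F := Finset.none_mem_insertNone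
  refine ⟨F, hfin.to_subtype, micro.restrict F fun q hq d => micro_next_mem hS q hq d,
    ⟨_, h₀⟩, ⟨_, h₁⟩, inputCode, 2, computable_inputCode, ?_, fun hcomp => ?_⟩
  · have h := congrArg Prod.snd (micro_halted none (Pi.single K'.main 2))
    exact Prod.ext rfl h
  · have hinit (n : ℕ) : codeCfg (init c [n]) =
        ((some (tr (trNormal c Cont'.halt)), none), Pi.single K'.main (inputCode n : ℤ)) := by
      rw [← code_trList_singleton, ← elim_comp_code]
      rfl
    have hhalt : codeCfg (halt [0]) = ((none, none), Pi.single K'.main 2) := by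
      rw [show (2 : ℤ) = code (trList [0]) from rfl, ← elim_comp_code]
      rfl
    have key (n : ℕ) : micro.Reach (codeCfg (init c [n])) (codeCfg (halt [0])) ↔
        (Nat.Partrec.Code.eval (Denumerable.ofNat _ n) 0).Dom := by
      have heval := tr_eval c [n]
      rw [show c.eval [n] = _ from hc ⟨[n], rfl⟩] at heval
      constructor
      · rintro ⟨k, hk⟩
        obtain ⟨c', hc', hl⟩ := exists_reaches_of_iterate (micro_halted _ _) rfl k _ hk
        have hmem : c' ∈ StateTransition.eval (TM2.step tr) (init c [n]) := by
          refine StateTransition.mem_eval.2 ⟨hc', ?_⟩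
          obtain ⟨l, v, S⟩ := c'
          obtain rfl : l = none := hl
          rfl
        rw [heval] at hmem
        obtain ⟨hd, -⟩ := hmem
        exact hd
      · intro hd
        refine reach_of_reaches (StateTransition.mem_eval.1 ?_).1 rfl
        rw [heval]
        exact ⟨hd, rfl⟩
    refine ComputablePred.halting_problem 0 ?_
    obtain ⟨f, hf, hfe⟩ := ComputablePred.computable_iff.1 hcomp
    refine ComputablePred.computable_iff.2
      ⟨_, hf.comp (Computable.encode (α := Nat.Partrec.Code)), funext fun p => ?_⟩
    refine Eq.trans ?_ (congrFun hfe _)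
    refine propext (Iff.symm ?_)
    have h := key (Encodable.encode p)
    rw [hinit, hhalt, Denumerable.ofNat_encode] at h
    exact (ModularMachine.restrict_reach_iff _ _ _ _).trans h

end StackSimulation

section Monomial

variable {K G : Type*} [Fintype K] [Group G]

theorem pairwise_commute_zpow {a : K → G} (ha : ∀ i j, Commute (a i) (a j)) (w : K → ℤ) :
    ((Finset.univ : Finset K) : Set K).Pairwise (Function.onFun Commute fun i => a i ^ w i) :=
  fun i _ j _ _ => (ha i j).zpow_zpow _ _

/-- The product of integer powers of commuting elements of a group. -/
def monomial (a : K → G) (ha : ∀ i j, Commute (a i) (a j)) (w : K → ℤ) : G :=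
  Finset.univ.noncommProd (fun i => a i ^ w i) (pairwise_commute_zpow ha w)

variable {a : K → G} (ha : ∀ i j, Commute (a i) (a j))

theorem monomial_add (v w : K → ℤ) :
    monomial a ha (v + w) = monomial a ha v * monomial a ha w :=
  (Finset.noncommProd_congr rfl (fun _ _ => zpow_add _ _ _) _).trans
    (Finset.noncommProd_mul_distrib _ _ _ _ fun i _ j _ _ => (ha i j).zpow_zpow _ _)

theorem monomial_single [DecidableEq K] (i : K) (n : ℤ) :
    monomial a ha (Pi.single i n) = a i ^ n := by
  refine (Finset.noncommProd_congr (Finset.insert_erase (Finset.mem_univ i)).symm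
    (fun _ _ => rfl) _).trans
    ((Finset.noncommProd_insert_of_notMem _ _ _ _ (Finset.notMem_erase _ _)).trans ?_)
  rw [Finset.noncommProd_eq_pow_card _ _ _ 1, one_pow, mul_one, Pi.single_eq_same]
  intro j hj
  rw [Pi.single_eq_of_ne (Finset.ne_of_mem_erase hj), zpow_zero]

theorem semiconjBy_monomial {g : G} {r s : K → ℤ}
    (h : ∀ i, SemiconjBy g (a i ^ r i) (a i ^ s i)) (w : K → ℤ) :
    SemiconjBy g (monomial a ha (r * w)) (monomial a ha (s * w)) := by
  rw [SemiconjBy, ← mul_inv_eq_iff_eq_mul, ← MulAut.conj_apply, monomial,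
    Finset.map_noncommProd]
  refine Finset.noncommProd_congr rfl (fun i _ => ?_) _
  rw [Pi.mul_apply, Pi.mul_apply, zpow_mul, zpow_mul, map_zpow, MulAut.conj_apply,
    (h i).eq, mul_inv_cancel_right]

end Monomial

namespace ModularMachine

variable {K Q : Type} [DecidableEq K] (M : ModularMachine K Q)

/-- Generators of the group of a modular machine. -/
inductive Generator
  | x (k : K)
  | t (q : Q)
  | ρ (q : Q) (d : Set.Ico 0 M.modulus)
  | κ

/-- Indices for the relations of the group of a modular machine. -/
inductive Relator
  | commute (k k' : K)
  | scale (q : Q) (d : Set.Ico 0 M.modulus) (k : K)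
  | move (q : Q) (d : Set.Ico 0 M.modulus)
  | stable (q : Q) (d : Set.Ico 0 M.modulus)
  | halt

/-- The vector with entry `m` in place `k`, and all other entries equal to one. -/
def scaling (k : K) (m : ℤ) : K → ℤ := Function.update 1 k m

open Generator in
/-- The relations of the group of a modular machine, stating that the first component conjugates the
third component to the second one. -/
def triple {G : Type*} [Group G] (q₁ : Q) (k₀ : K) (e : ℤ) (φ : M.Generator → G) :
    M.Relator → G × G × G
  | .commute k k' => (φ (x k), φ (x k'), φ (x k'))
  | .scale q d k => (φ (ρ q d), φ (x k) ^ scaling (M.key q) M.modulus k,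
      φ (x k) ^ scaling (M.key q) (M.coeff q d) k)
  | .move q d => (φ (ρ q d),
      φ (x (M.key q)) ^ (d : ℤ) * φ (t q) * (φ (x (M.key q)) ^ (d : ℤ))⁻¹,
      φ (x (M.key q)) ^ M.offset q d * φ (t (M.next q d)) * (φ (x (M.key q)) ^ M.offset q d)⁻¹)
  | .stable q d => (φ κ, φ (ρ q d), φ (ρ q d))
  | .halt => (φ κ, φ (x k₀) ^ e * φ (t q₁) * (φ (x k₀) ^ e)⁻¹,
      φ (x k₀) ^ e * φ (t q₁) * (φ (x k₀) ^ e)⁻¹)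

/-- The relations hold for the images of the generators. -/
def IsModel {G : Type*} [Group G] (q₁ : Q) (k₀ : K) (e : ℤ) (φ : M.Generator → G) : Prop :=
  ∀ r, SemiconjBy (M.triple q₁ k₀ e φ r).1 (M.triple q₁ k₀ e φ r).2.1 (M.triple q₁ k₀ e φ r).2.2

/-- The defining relators of the group of a modular machine. -/
def relators (q₁ : Q) (k₀ : K) (e : ℤ) : Set (FreeGroup M.Generator) :=
  Set.range fun r => (M.triple q₁ k₀ e FreeGroup.of r).1 * (M.triple q₁ k₀ e FreeGroup.of r).2.1 *
    (M.triple q₁ k₀ e FreeGroup.of r).1⁻¹ * (M.triple q₁ k₀ e FreeGroup.of r).2.2⁻¹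

instance [Finite K] [Finite Q] : Finite M.Generator := by
  let f : M.Generator → K ⊕ Q ⊕ (Q × Set.Ico 0 M.modulus) ⊕ Unit
    | .x k => .inl k
    | .t q => .inr (.inl q)
    | .ρ q d => .inr (.inr (.inl (q, d)))
    | .κ => .inr (.inr (.inr ()))
  refine Finite.of_injective f ?_
  rintro (_ | _ | _ | _) (_ | _ | _ | _) h <;> simp_all [f]

instance [Finite K] [Finite Q] : Finite M.Relator := by
  let f : M.Relator → (K × K) ⊕ (Q × Set.Ico 0 M.modulus × K) ⊕ (Q × Set.Ico 0 M.modulus) ⊕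
      (Q × Set.Ico 0 M.modulus) ⊕ Unit
    | .commute k k' => .inl (k, k')
    | .scale q d k => .inr (.inl (q, d, k))
    | .move q d => .inr (.inr (.inl (q, d)))
    | .stable q d => .inr (.inr (.inr (.inl (q, d))))
    | .halt => .inr (.inr (.inr (.inr ())))
  refine Finite.of_injective f ?_
  rintro (_ | _ | _ | _ | _) (_ | _ | _ | _ | _) h <;> simp_all [f]

theorem finite_relators [Finite K] [Finite Q] (q₁ : Q) (k₀ : K) (e : ℤ) :
    (M.relators q₁ k₀ e).Finite :=
  Set.finite_range _

variable {M} {G H : Type*} [Group G] [Group H] {q₁ : Q} {k₀ : K} {e : ℤ}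

theorem map_triple (f : G →* H) (φ : M.Generator → G) (r : M.Relator) :
    M.triple q₁ k₀ e (f ∘ φ) r =
      Prod.map f (Prod.map f f) (M.triple q₁ k₀ e φ r) := by
  cases r <;> simp [triple]

theorem IsModel.commute {φ : M.Generator → G} (h : M.IsModel q₁ k₀ e φ) (i j : K) :
    Commute (φ (.x i)) (φ (.x j)) :=
  h (.commute i j)

theorem isModel_iff (φ : M.Generator → G) :
    M.IsModel q₁ k₀ e φ ↔ ∀ r ∈ M.relators q₁ k₀ e, FreeGroup.lift φ r = 1 := by
  simp only [relators, Set.forall_mem_range, IsModel]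
  refine forall_congr' fun r => ?_
  have h := map_triple (q₁ := q₁) (k₀ := k₀) (e := e) (FreeGroup.lift φ) FreeGroup.of r
  rw [show FreeGroup.lift φ ∘ FreeGroup.of = φ from funext fun _ => FreeGroup.lift_apply_of] at h
  rw [h]
  simp only [Prod.map, map_mul, map_inv, mul_inv_eq_one]
  exact mul_inv_eq_iff_eq_mul.symm

theorem isModel_presentedGroup :
    M.IsModel q₁ k₀ e (PresentedGroup.of (rels := M.relators q₁ k₀ e)) := by
  rw [isModel_iff]
  intro r hr
  have h : FreeGroup.lift (PresentedGroup.of (rels := M.relators q₁ k₀ e)) =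
      PresentedGroup.mk _ := by
    ext
    simp [PresentedGroup.of]
  rw [h]
  exact PresentedGroup.one_of_mem hr

theorem scaling_mul_add_single (k : K) (m d : ℤ) (v : K → ℤ) :
    scaling k m * v + Pi.single k d = Function.update v k (m * v k + d) := by
  funext i
  rcases eq_or_ne i k with rfl | h
  · simp [scaling]
  · simp [scaling, h]

/-- The conjugate of the generator of a state by a monomial. -/
def token [Fintype K] (φ : M.Generator → G) (hφ : ∀ i j, Commute (φ (.x i)) (φ (.x j)))
    (s : Q × (K → ℤ)) : G :=
  monomial (fun k => φ (.x k)) hφ s.2 * φ (.t s.1) * (monomial (fun k => φ (.x k)) hφ s.2)⁻¹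

theorem token_single [Fintype K] (φ : M.Generator → G)
    (hφ : ∀ i j, Commute (φ (.x i)) (φ (.x j))) (q : Q) (k : K) (n : ℤ) :
    token φ hφ (q, Pi.single k n) = φ (.x k) ^ n * φ (.t q) * (φ (.x k) ^ n)⁻¹ := by
  rw [token, monomial_single]

theorem token_add [Fintype K] (φ : M.Generator → G)
    (hφ : ∀ i j, Commute (φ (.x i)) (φ (.x j))) (q : Q) (v w : K → ℤ) :
    token φ hφ (q, v + w) =
      monomial _ hφ v * token φ hφ (q, w) * (monomial _ hφ v)⁻¹ := by
  simp only [token, monomial_add, mul_inv_rev, mul_assoc]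

/-- The residue of the entry that is rewritten. -/
def residue (M : ModularMachine K Q) (s : Q × (K → ℤ)) : Set.Ico 0 M.modulus :=
  ⟨s.2 (M.key s.1) % M.modulus, Int.emod_nonneg _ M.modulus_pos.ne',
    Int.emod_lt_of_pos _ M.modulus_pos⟩

theorem IsModel.semiconjBy_token [Fintype K] {φ : M.Generator → G} (h : M.IsModel q₁ k₀ e φ)
    (s : Q × (K → ℤ)) :
    SemiconjBy (φ (.ρ s.1 (M.residue s))) (token φ h.commute s)
      (token φ h.commute (M.step s)) := by
  obtain ⟨q, w⟩ := s
  set d := M.residue (q, w)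
  have hw : w = scaling (M.key q) M.modulus *
      Function.update w (M.key q) (w (M.key q) / M.modulus) + Pi.single (M.key q) (d : ℤ) := by
    rw [scaling_mul_add_single, Function.update_self, Function.update_idem]
    change w = Function.update w _ (_ * _ + w (M.key q) % M.modulus)
    rw [Int.mul_ediv_add_emod, Function.update_eq_self]
  have hstep : M.step (q, w) = (M.next q d, scaling (M.key q) (M.coeff q d) *
      Function.update w (M.key q) (w (M.key q) / M.modulus) +
        Pi.single (M.key q) (M.offset q d)) := by
    rw [scaling_mul_add_single, Function.update_self, Function.update_idem]
    rfl
  have hm := semiconjBy_monomial h.commute (fun k => h (.scale q d k))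
    (Function.update w (M.key q) (w (M.key q) / M.modulus))
  have ht : SemiconjBy (φ (.ρ q d)) _ _ := h (.move q d)
  rw [hstep, token_add, token_single]
  generalize Function.update w (M.key q) (w (M.key q) / M.modulus) = v at *
  clear_value d
  subst hw
  rw [token_add, token_single]
  exact (hm.mul_right ht).mul_right hm.inv_right

theorem IsModel.commute_of_reach [Fintype K] {φ : M.Generator → G} (h : M.IsModel q₁ k₀ e φ)
    {s : Q × (K → ℤ)} (hs : M.Reach s (q₁, Pi.single k₀ e)) :
    Commute (φ .κ) (token φ h.commute s) := by
  obtain ⟨n, hn⟩ := hs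
  induction n generalizing s with
  | zero =>
    obtain rfl : s = _ := hn
    rw [token_single]
    exact h .halt
  | succ n ih =>
    have hρ : Commute (φ .κ) (φ (.ρ s.1 (M.residue s))) := h (.stable _ _)
    have key := (h.semiconjBy_token s).eq
    rw [← eq_inv_mul_iff_mul_eq] at key
    rw [key]
    exact hρ.inv_right.mul_right ((ih hn).mul_right hρ)

end ModularMachine

/-- Two maps with equivalent fibres are related by an equivalence, which may be prescribed at two
points. -/
theorem exists_equiv_of_fiber_equiv {X Y Z : Type*} {f : X → Z} {g : Y → Z}
    (h : ∀ z, Nonempty ({a // f a = z} ≃ {b // g b = z})) {x : Bool → X} {y : Bool → Y}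
    (hx : x false ≠ x true) (hy : y false ≠ y true) (hxy : ∀ b, g (y b) = f (x b)) :
    ∃ e : X ≃ Y, (∀ a, g (e a) = f a) ∧ ∀ b, e (x b) = y b := by
  classical
  have hswap {y₁ y₂ : Y} (h : g y₁ = g y₂) (y : Y) : g (Equiv.swap y₁ y₂ y) = g y := by
    rw [Equiv.swap_apply_def]
    split_ifs with h₁ h₂
    · rw [h₁, h]
    · rw [h₂, h]
    · rfl
  let e₀ : X ≃ Y := Equiv.ofFiberEquiv fun z => (h z).some
  have he₀ (a : X) : g (e₀ a) = f a := Equiv.ofFiberEquiv_map _ a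
  let e₁ := e₀.trans (Equiv.swap (e₀ (x false)) (y false))
  have he₁ (a : X) : g (e₁ a) = f a :=
    (hswap ((he₀ _).trans (hxy _).symm) _).trans (he₀ a)
  have hfalse : e₁ (x false) = y false := Equiv.swap_apply_left _ _
  refine ⟨e₁.trans (Equiv.swap (e₁ (x true)) (y true)),
    fun a => (hswap ((he₁ _).trans (hxy _).symm) _).trans (he₁ a), ?_⟩
  rintro (_ | _)
  · rw [Equiv.trans_apply, hfalse, Equiv.swap_apply_of_ne_of_ne _ hy]
    rw [← hfalse]
    exact e₁.injective.ne hx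
  · exact Equiv.swap_apply_left _ _

namespace ModularMachine

/-- Labels of the copies of the lattice on which the group of a modular machine acts. There are two
copies for each state, and sufficiently many others. -/
inductive Label (K Q : Type)
  | marker (q : Q) (b : Bool)
  | filler (f : (K → ℤ) → Prop) (l : List ((ℤ × Q × Bool) ⊕ (ℤ × ((K → ℤ) → Prop))))

variable {K Q : Type} [DecidableEq K]

/-- A subset of the copies of the lattice. -/
def IsMarked (H : Set (Q × (K → ℤ))) : (K → ℤ) × Label K Q → Prop
  | (_, .marker _ false) => True
  | (w, .marker q true) => (q, w) ∈ H
  | (w, .filler f _) => f w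

/-- Division with remainder of one coordinate. -/
def splitEquiv (k : K) {m : ℤ} (hm : 0 < m) :
    (K → ℤ) × Label K Q ≃ (K → ℤ) × (Set.Ico 0 m × Label K Q) where
  toFun s := (Function.update s.1 k (s.1 k / m),
    ⟨s.1 k % m, Int.emod_nonneg _ hm.ne', Int.emod_lt_of_pos _ hm⟩, s.2)
  invFun s := (Function.update s.1 k (m * s.1 k + s.2.1), s.2.2)
  left_inv s := by
    simp [Int.mul_ediv_add_emod]
  right_inv s := by
    obtain ⟨v, ⟨i, hi⟩, c⟩ := s
    have h₁ : (m * v k + i) % m = i := by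
      rw [Int.mul_add_emod_self_left, Int.emod_eq_of_lt hi.1 hi.2]
    have h₂ : (m * v k + i) / m = v k := by
      rw [Int.mul_add_ediv_left _ _ hm.ne', Int.ediv_eq_zero_of_lt hi.1 hi.2, add_zero]
    simp [h₁, h₂]

theorem splitEquiv_symm_apply (k : K) {m : ℤ} (hm : 0 < m) (v : K → ℤ)
    (r : Set.Ico 0 m × Label K Q) :
    (splitEquiv k hm).symm (v, r) =
      (Function.update v k (m * v k + r.1), r.2) := rfl

/-- The marked elements in a coset. -/
def pattern (H : Set (Q × (K → ℤ))) (k : K) {m : ℤ} (hm : 0 < m) (r : Set.Ico 0 m × Label K Q)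
    (v : K → ℤ) : Prop :=
  IsMarked H ((splitEquiv k hm).symm (v, r))

theorem nonempty_fiber_embedding (H : Set (Q × (K → ℤ))) (k k' : K) {m m' : ℤ} (hm : 0 < m)
    (hm' : 0 < m') (g : (K → ℤ) → Prop) :
    Nonempty ({r // pattern H k hm r = g} ↪ {r // pattern H k' hm' r = g}) := by
  let f₁ : Set.Ico 0 m × Label K Q → List ((ℤ × Q × Bool) ⊕ (ℤ × ((K → ℤ) → Prop)))
    | (i, .marker q b) => [.inl (i, q, b)]
    | (i, .filler f l) => .inr (i, f) :: l
  have hf₁ : Function.Injective f₁ := by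
    rintro ⟨⟨i, _⟩, _ | _⟩ ⟨⟨j, _⟩, _ | _⟩ h <;> simp_all [f₁]
  let f₂ (l : List ((ℤ × Q × Bool) ⊕ (ℤ × ((K → ℤ) → Prop)))) :
      {r : Set.Ico 0 m' × Label K Q // pattern H k' hm' r = g} :=
    ⟨(⟨0, le_rfl, hm'⟩, .filler (fun w => g (Function.update w k' (w k' / m'))) l), by
      funext v
      simp [pattern, splitEquiv_symm_apply, IsMarked, hm'.ne']⟩
  have hf₂ : Function.Injective f₂ := by
    intro l l' h
    simpa [f₂] using h
  exact ⟨fun r => f₂ (f₁ r), fun r r' h => Subtype.ext (hf₁ (hf₂ h))⟩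

/-- Translations of the copies of the lattice. -/
def translation (K Q : Type) : Multiplicative (K → ℤ) →* Equiv.Perm ((K → ℤ) × Label K Q) where
  toFun v := (Equiv.addLeft v.toAdd).prodCongr (Equiv.refl _)
  map_one' := by ext <;> simp
  map_mul' v w := by
    ext s
    · simp [add_assoc]
    · rfl

theorem exists_perm (M : ModularMachine K Q) {H : Set (Q × (K → ℤ))}
    (hH : ∀ s, M.step s ∈ H ↔ s ∈ H) (q : Q) (d : Set.Ico 0 M.modulus) :
    ∃ σ : Equiv.Perm ((K → ℤ) × Label K Q),
      (∀ s, IsMarked H (σ s) ↔ IsMarked H s) ∧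
      (∀ v, SemiconjBy σ (translation K Q (.ofAdd (scaling (M.key q) M.modulus * v)))
        (translation K Q (.ofAdd (scaling (M.key q) (M.coeff q d) * v)))) ∧
      ∀ b, σ (Pi.single (M.key q) (d : ℤ), .marker q b) =
        (Pi.single (M.key q) (M.offset q d), .marker (M.next q d) b) := by
  have hm := M.modulus_pos
  have hc : M.offset q d ∈ Set.Ico 0 (M.coeff q d) :=
    ⟨M.offset_nonneg q d d.2.1, M.offset_lt q d d.2.2⟩
  have hp : 0 < M.coeff q d := hc.1.trans_lt hc.2
  obtain ⟨e, he, hb⟩ := exists_equiv_of_fiber_equiv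
    (f := pattern H (M.key q) hm) (g := pattern H (M.key q) hp)
    (fun z => (nonempty_fiber_embedding H _ _ hm hp z).elim fun i =>
      (nonempty_fiber_embedding H _ _ hp hm z).elim fun j => i.antisymm j)
    (x := fun b => (d, .marker q b)) (y := fun b => (⟨_, hc⟩, .marker (M.next q d) b))
    (by simp) (by simp) (by
      rintro (_ | _)
      · rfl
      · funext v
        have h := hH (q, Function.update v (M.key q) (M.modulus * v (M.key q) + d))
        have hd : (M.modulus * v (M.key q) + d) % M.modulus = d := by
          rw [Int.mul_add_emod_self_left, Int.emod_eq_of_lt d.2.1 d.2.2]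
        have hv : (M.modulus * v (M.key q) + d) / M.modulus = v (M.key q) := by
          rw [Int.mul_add_ediv_left _ _ hm.ne', Int.ediv_eq_zero_of_lt d.2.1 d.2.2, add_zero]
        simp only [step, Function.update_self, hd, hv, Function.update_idem] at h
        exact propext h)
  let σ := ((splitEquiv (M.key q) hm).trans ((Equiv.refl _).prodCongr e)).trans
    (splitEquiv (M.key q) hp).symm
  have hσ (v r) : σ ((splitEquiv (M.key q) hm).symm (v, r)) =
      (splitEquiv (M.key q) hp).symm (v, e r) := by
    simp [σ]
  refine ⟨σ, ?_, ?_, ?_⟩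
  · intro s
    obtain ⟨⟨v, r⟩, rfl⟩ := (splitEquiv (M.key q) hm).symm.surjective s
    rw [hσ]
    exact iff_of_eq (congrFun (he r) v)
  · intro v
    refine Equiv.ext fun s => ?_
    obtain ⟨⟨w, r⟩, rfl⟩ := (splitEquiv (M.key q) hm).symm.surjective s
    have htr {m : ℤ} (hm : 0 < m) (r : Set.Ico 0 m × Label K Q) :
        translation K Q (.ofAdd (scaling (M.key q) m * v))
        ((splitEquiv (M.key q) hm).symm (w, r)) = (splitEquiv (M.key q) hm).symm (v + w, r) := by
      rw [splitEquiv_symm_apply, splitEquiv_symm_apply, ← scaling_mul_add_single,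
        ← scaling_mul_add_single, mul_add, add_assoc]
      rfl
    rw [Equiv.Perm.mul_apply, Equiv.Perm.mul_apply, htr, hσ, hσ, htr]
  · intro b
    have h := hσ 0 (d, .marker q b)
    simpa [hb, splitEquiv_symm_apply, ← Pi.single.eq_1] using h

end ModularMachine

namespace ModularMachine

variable {K Q : Type}

/-- The extension of permutations by the identity on a second factor. -/
def extend (S : Type) : Equiv.Perm S →* Equiv.Perm (S × ℤ) where
  toFun σ := σ.prodCongr (Equiv.refl _)
  map_one' := by ext <;> simp
  map_mul' σ τ := by ext <;> simp

theorem extend_apply {S : Type} (σ : Equiv.Perm S) (s : S) (n : ℤ) :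
    extend S σ (s, n) = (σ s, n) := rfl

open Classical in
/-- The translation of the second factor over a subset of the first factor. -/
noncomputable def shift {S : Type} (P : S → Prop) : Multiplicative ℤ →* Equiv.Perm (S × ℤ) where
  toFun k := Equiv.prodShear (Equiv.refl S) fun s => Equiv.addLeft (if P s then k.toAdd else 0)
  map_one' := by ext <;> simp
  map_mul' k l := by
    ext s
    · rfl
    · by_cases h : P s.1 <;> simp [h]

theorem shift_apply_of_mem {S : Type} {P : S → Prop} {s : S} (hs : P s) (k n : ℤ) :
    shift P (.ofAdd k) (s, n) = (s, k + n) := by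
  simp [shift, hs]

theorem shift_apply_of_notMem {S : Type} {P : S → Prop} {s : S} (hs : ¬ P s) (k n : ℤ) :
    shift P (.ofAdd k) (s, n) = (s, n) := by
  simp [shift, hs]

theorem commute_shift_extend {S : Type} {P : S → Prop} {σ : Equiv.Perm S}
    (h : ∀ s, P (σ s) ↔ P s) (k : Multiplicative ℤ) : Commute (shift P k) (extend S σ) := by
  refine Equiv.ext fun ⟨s, n⟩ => ?_
  rw [Equiv.Perm.mul_apply, Equiv.Perm.mul_apply, extend_apply]
  by_cases hs : P s
  · rw [← ofAdd_toAdd k, shift_apply_of_mem hs, shift_apply_of_mem ((h s).2 hs), extend_apply]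
  · rw [← ofAdd_toAdd k, shift_apply_of_notMem hs, shift_apply_of_notMem (mt (h s).1 hs),
      extend_apply]

theorem translation_single_zpow [DecidableEq K] (k : K) (n : ℤ) :
    translation K Q (.ofAdd (Pi.single k 1)) ^ n = translation K Q (.ofAdd (Pi.single k n)) := by
  rw [← map_zpow, ← ofAdd_zsmul, ← Pi.single_smul, smul_eq_mul, mul_one]

open Classical in
/-- The conjugates of the permutation that represents a state. -/
noncomputable def exchange (s : Q × (K → ℤ)) : Equiv.Perm ((K → ℤ) × Label K Q) :=
  Equiv.swap (s.2, .marker s.1 false) (s.2, .marker s.1 true)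

theorem translation_mul_exchange (q : Q) (v : K → ℤ) :
    translation K Q (.ofAdd v) * exchange (q, 0) * (translation K Q (.ofAdd v))⁻¹ =
      exchange (q, v) := by
  classical
  rw [exchange, ← Equiv.swap_apply_apply]
  simp [translation, exchange]

theorem isMarked_exchange {H : Set (Q × (K → ℤ))} {s : Q × (K → ℤ)} (hs : s ∈ H)
    (x : (K → ℤ) × Label K Q) : IsMarked H (exchange s x) ↔ IsMarked H x := by
  classical
  rw [exchange, Equiv.swap_apply_def]
  split_ifs with h₁ h₂
  · subst h₁
    exact iff_of_true hs trivial
  · subst h₂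
    exact iff_of_true trivial hs
  · rfl

variable [DecidableEq K] {M : ModularMachine K Q} {q₁ : Q} {k₀ : K} {e : ℤ}

/-- The action of the generators of the group of a modular machine. -/
noncomputable def action (M : ModularMachine K Q) {H : Set (Q × (K → ℤ))}
    (hH : ∀ s, M.step s ∈ H ↔ s ∈ H) :
    M.Generator → Equiv.Perm (((K → ℤ) × Label K Q) × ℤ)
  | .x k => extend _ (translation K Q (.ofAdd (Pi.single k 1)))
  | .t q => extend _ (exchange (q, 0))
  | .ρ q d => extend _ (M.exists_perm hH q d).choose
  | .κ => shift (IsMarked H) (.ofAdd 1)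

theorem action_conj {H : Set (Q × (K → ℤ))} (hH : ∀ s, M.step s ∈ H ↔ s ∈ H) (q : Q) (k : K)
    (n : ℤ) :
    M.action hH (.x k) ^ n * M.action hH (.t q) * (M.action hH (.x k) ^ n)⁻¹ =
      extend _ (exchange (q, Pi.single k n)) := by
  simp only [action]
  rw [← map_zpow, translation_single_zpow, ← map_inv, ← map_mul, ← map_mul,
    translation_mul_exchange]

theorem isModel_action {H : Set (Q × (K → ℤ))} (hH : ∀ s, M.step s ∈ H ↔ s ∈ H)
    (he : (q₁, Pi.single k₀ e) ∈ H) : M.IsModel q₁ k₀ e (M.action hH) := by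
  rintro (⟨k, k'⟩ | ⟨q, d, k⟩ | ⟨q, d⟩ | ⟨q, d⟩ | _) <;> simp only [triple, action_conj]
  · exact ((Commute.all _ _).map _).map _
  · obtain ⟨-, h, -⟩ := (M.exists_perm hH q d).choose_spec
    simp only [action]
    rw [← map_zpow (extend _), ← map_zpow (extend _), translation_single_zpow, translation_single_zpow]
    have := h (Pi.single k 1)
    rw [← Pi.single_mul_right, ← Pi.single_mul_right, mul_one, mul_one] at this
    exact this.map _
  · classical
    obtain ⟨-, -, h⟩ := (M.exists_perm hH q d).choose_spec
    refine SemiconjBy.map ?_ (extend _)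
    rw [SemiconjBy, exchange, Equiv.mul_swap_eq_swap_mul, h, h]
    rfl
  · exact commute_shift_extend (M.exists_perm hH q d).choose_spec.1 _
  · exact commute_shift_extend (isMarked_exchange he) _

theorem eq_zero_of_not_reach {q₀ : Q} {j : ℤ}
    (hstep : M.step (q₁, Pi.single k₀ e) = (q₁, Pi.single k₀ e))
    (h : ¬ M.Reach (q₀, Pi.single k₀ j) (q₁, Pi.single k₀ e)) {k l : ℤ}
    (hkl : (PresentedGroup.of (rels := M.relators q₁ k₀ e) (.x k₀) ^ j * .of (.t q₀) *
      (.of (.x k₀) ^ j)⁻¹) * .of .κ ^ k =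
      .of .κ ^ l * (.of (.x k₀) ^ j * .of (.t q₀) * (.of (.x k₀) ^ j)⁻¹)) :
    k = 0 ∧ l = 0 := by
  let H : Set (Q × (K → ℤ)) := {s | M.Reach s (q₁, Pi.single k₀ e)}
  have hH (s : Q × (K → ℤ)) : M.step s ∈ H ↔ s ∈ H := reach_step_iff hstep
  have hmodel : M.IsModel q₁ k₀ e (M.action hH) := isModel_action hH ⟨0, rfl⟩
  have key := congrArg (PresentedGroup.toGroup ((isModel_iff _).1 hmodel)) hkl
  simp only [map_mul, map_inv, map_zpow, PresentedGroup.toGroup.of, action_conj] at key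
  rw [action, ← map_zpow (shift _) _ k, ← map_zpow (shift _) _ l, ← ofAdd_zsmul, ← ofAdd_zsmul, smul_eq_mul, smul_eq_mul,
    mul_one, mul_one] at key
  have hfalse : IsMarked H (Pi.single k₀ j, .marker q₀ false) := trivial
  have htrue : ¬ IsMarked H (Pi.single k₀ j, .marker q₀ true) := h
  constructor
  · have := congrArg Prod.snd
      (Equiv.congr_fun key ((Pi.single k₀ j, .marker q₀ false), 0))
    simpa [extend_apply, shift_apply_of_mem hfalse, shift_apply_of_notMem htrue, exchange]
      using this
  · have := congrArg Prod.snd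
      (Equiv.congr_fun key ((Pi.single k₀ j, .marker q₀ true), 0))
    simpa [extend_apply, shift_apply_of_mem hfalse, shift_apply_of_notMem htrue, exchange, eq_comm]
      using this

end ModularMachine

/-- There is a finitely presented group with elements `x`, `t` and `κ` for which it is undecidable,
for `n` in the range of a computable function `j`, whether `κ` commutes with
`y := x ^ n * t * x ^ (-n)`; if it does not, then `y` conjugates no nontrivial power of `κ` to a
power of `κ`. -/
theorem exists_presentation : ∃ (α : Type) (_ : Finite α) (rels : Set (FreeGroup α))
    (_ : rels.Finite) (x t κ : α) (j : ℕ → ℕ) (P : ℕ → Prop), Computable j ∧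
    ¬ ComputablePred P ∧
    (∀ n, P n → Commute (PresentedGroup.of (rels := rels) κ)
      (.of x ^ (j n : ℤ) * .of t * (.of x ^ (j n : ℤ))⁻¹)) ∧
    ∀ n, ¬ P n → ∀ k l : ℤ, (PresentedGroup.of (rels := rels) x ^ (j n : ℤ) * .of t *
      (.of x ^ (j n : ℤ))⁻¹) * .of κ ^ k =
        .of κ ^ l * (.of x ^ (j n : ℤ) * .of t * (.of x ^ (j n : ℤ))⁻¹) → k = 0 ∧ l = 0 := by
  obtain ⟨Q, _, M, q₀, q₁, j, e, hj, hstep, hcomp⟩ := StackSimulation.exists_machine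
  have hK : Fintype Turing.PartrecToTM2.K' :=
    ⟨{.main, .rev, .aux, .stack}, by rintro (_ | _) <;> simp⟩
  refine ⟨M.Generator, inferInstance, M.relators q₁ .main e, M.finite_relators _ _ _, .x .main,
    .t q₀, .κ, j, _, hj, hcomp, fun n hn => ?_, fun n hn k l => ?_⟩
  · have h := ModularMachine.isModel_presentedGroup.commute_of_reach hn
    rwa [ModularMachine.token_single] at h
  · exact ModularMachine.eq_zero_of_not_reach hstep hn

namespace FiberProduct

variable {α : Type*}

/-- Generators of the fiber product of two copies of a free group over a presented group. -/
def generators (rels : Set (FreeGroup α)) : Set (FreeGroup α × FreeGroup α) :=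
  Set.range (fun a => (.of a, .of a)) ∪ Prod.mk 1 '' rels

theorem finite_generators [Finite α] {rels : Set (FreeGroup α)} (h : rels.Finite) :
    (generators rels).Finite :=
  (Set.finite_range _).union (h.image _)

theorem diagonal_mem (rels : Set (FreeGroup α)) (g : FreeGroup α) :
    (g, g) ∈ Subgroup.closure (generators rels) := by
  have : (Subgroup.closure (generators rels)).comap ((MonoidHom.id _).prod (MonoidHom.id _)) =
      ⊤ := by
    rw [eq_top_iff, ← FreeGroup.closure_range_of, Subgroup.closure_le]
    rintro _ ⟨a, rfl⟩
    exact Subgroup.subset_closure (.inl ⟨a, rfl⟩)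
  exact (this.symm ▸ Subgroup.mem_top g :)

theorem mem_closure_generators {rels : Set (FreeGroup α)} {g h : FreeGroup α} :
    (g, h) ∈ Subgroup.closure (generators rels) ↔
      PresentedGroup.mk rels g = PresentedGroup.mk rels h := by
  constructor
  · intro hgh
    have : Subgroup.closure (generators rels) ≤
        ((PresentedGroup.mk rels).comp (MonoidHom.fst _ _)).eqLocus
          ((PresentedGroup.mk rels).comp (MonoidHom.snd _ _)) := by
      rw [Subgroup.closure_le]
      rintro _ (⟨a, rfl⟩ | ⟨r, hr, rfl⟩)
      · rfl
      · exact ((map_one (PresentedGroup.mk rels)).trans (PresentedGroup.one_of_mem hr).symm :)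
    exact this hgh
  · intro hgh
    let N : Subgroup (FreeGroup α) :=
      (Subgroup.closure (generators rels)).comap (MonoidHom.inr _ _)
    have hN : N.Normal := by
      refine ⟨fun n hn a => ?_⟩
      have := mul_mem (mul_mem (diagonal_mem rels a) hn) (inv_mem (diagonal_mem rels a))
      simpa [N] using this
    have hle : Subgroup.normalClosure rels ≤ N :=
      Subgroup.normalClosure_le_normal fun r hr => Subgroup.subset_closure (.inr ⟨r, hr, rfl⟩)
    have := mul_mem (diagonal_mem rels g) (hle (QuotientGroup.eq.1 hgh))
    simpa using this

end FiberProduct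

/-- The `n`-th power of the transvection of determinant one along `(1, c)`. -/
def shear (c : ℤ) : Multiplicative ℤ →* Matrix.SpecialLinearGroup (Fin 2) ℤ where
  toFun n := ⟨!![1 - n.toAdd * c, n.toAdd; -n.toAdd * c ^ 2, 1 + n.toAdd * c], by
    rw [Matrix.det_fin_two_of]; ring⟩
  map_one' := by
    ext i j
    fin_cases i <;> fin_cases j <;> simp
  map_mul' m n := by
    refine Subtype.ext (Eq.trans ?_ (Matrix.mul_fin_two ..).symm)
    ext i j
    fin_cases i <;> fin_cases j <;> simp <;> ring

namespace shear

theorem coe_apply (c n : ℤ) : (shear c (.ofAdd n) : Matrix (Fin 2) (Fin 2) ℤ) =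
    !![1 - n * c, n; -n * c ^ 2, 1 + n * c] := rfl

theorem mulVec (c n : ℤ) (v : Fin 2 → ℤ) :
    (shear c (.ofAdd n) : Matrix (Fin 2) (Fin 2) ℤ).mulVec v =
      ![v 0 + n * (v 1 - c * v 0), v 1 + n * (v 1 - c * v 0) * c] := by
  rw [coe_apply]
  ext i
  fin_cases i <;> simp [Matrix.mulVec, dotProduct] <;> ring

theorem eq_of_mulVec_eq {g : Matrix.SpecialLinearGroup (Fin 2) ℤ}
    (h : (g : Matrix (Fin 2) (Fin 2) ℤ).mulVec ![1, 0] = ![1, 0]) :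
    g = shear 0 (.ofAdd (g 0 1)) := by
  have h0 := congrFun h 0
  have h1 := congrFun h 1
  have hdet := g.det_coe
  simp only [Matrix.mulVec, dotProduct, Fin.sum_univ_two, Matrix.cons_val_zero,
    Matrix.cons_val_one, mul_one, mul_zero, add_zero] at h0 h1
  rw [Matrix.det_fin_two, h0, h1] at hdet
  refine Subtype.ext ((Matrix.eta_fin_two _).trans ?_)
  rw [coe_apply, h0, h1, show g 1 1 = 1 by linarith]
  simp

/-- The ping-pong domains of the transvections along `(1, c)`. -/
def domain (c : ℤ) : Set (Fin 2 → ℤ) :=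
  {v | ∀ d ≠ c, |v 1 - c * v 0| < |v 1 - d * v 0|}

theorem mulVec_mem_domain {c d n : ℤ} (hcd : c ≠ d) (hn : n ≠ 0) {v : Fin 2 → ℤ}
    (hv : v ∈ domain d) :
    (shear c (.ofAdd (4 * n)) : Matrix (Fin 2) (Fin 2) ℤ).mulVec v ∈ domain c := by
  have hlt := hv c hcd
  intro e he
  rw [mulVec]
  set a := v 0
  set x := v 1 - c * a with hx
  have hx0 : 0 < |x| := (abs_nonneg _).trans_lt hlt
  have ha : |a| < 2 * |x| := by
    have h₁ : |(c - d) * a| < 2 * |x| := by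
      calc |(c - d) * a| = |(v 1 - d * a) - x| := by rw [hx]; ring_nf
        _ ≤ |v 1 - d * a| + |x| := abs_sub _ _
        _ < 2 * |x| := by linarith
    have h₂ : 1 ≤ |c - d| := Int.one_le_abs (sub_ne_zero.2 hcd)
    rw [abs_mul] at h₁
    nlinarith [abs_nonneg a]
  have hy : 2 * |x| < |a + 4 * n * x| := by
    have h₁ : 1 ≤ |n| := Int.one_le_abs hn
    have h₂ : |4 * n * x| ≤ |a + 4 * n * x| + |a| := by
      calc |4 * n * x| = |(a + 4 * n * x) - a| := by ring_nf
        _ ≤ _ := abs_sub _ _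
    rw [abs_mul, abs_mul, show |(4 : ℤ)| = 4 from rfl] at h₂
    nlinarith
  have hz : |(c - e) * (a + 4 * n * x)| ≤
      |v 1 + 4 * n * x * c - e * (a + 4 * n * x)| + |x| := by
    calc |(c - e) * (a + 4 * n * x)|
        = |(v 1 + 4 * n * x * c - e * (a + 4 * n * x)) - x| := by rw [hx]; ring_nf
      _ ≤ _ := abs_sub _ _
  have hce : 1 ≤ |c - e| := Int.one_le_abs (sub_ne_zero.2 he.symm)
  rw [abs_mul] at hz
  have hc : |v 1 + 4 * n * x * c - c * (a + 4 * n * x)| = |x| := by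
    rw [hx]; ring_nf
  simp only [Matrix.cons_val_zero, Matrix.cons_val_one]
  rw [hc]
  nlinarith

/-- The homomorphism that maps the free generators to fourth powers of transvections. -/
def freeLift : FreeGroup ℤ →* Matrix.SpecialLinearGroup (Fin 2) ℤ :=
  FreeGroup.lift fun c => shear c (.ofAdd 4)

theorem freeLift_of_zpow (c n : ℤ) : freeLift (.of c ^ n) = shear c (.ofAdd (4 * n)) := by
  rw [map_zpow, freeLift, FreeGroup.lift_apply_of, ← map_zpow, ← ofAdd_zsmul, smul_eq_mul,
    mul_comm]

open scoped Pointwise Function in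
theorem injective_freeLift : Function.Injective freeLift := by
  let f (c : ℤ) : FreeGroup Unit →* ((Fin 2 → ℤ) ≃ₗ[ℤ] (Fin 2 → ℤ)) :=
    Matrix.SpecialLinearGroup.toLin'.comp (freeLift.comp (FreeGroup.map fun _ => c))
  have hf : Matrix.SpecialLinearGroup.toLin'.comp freeLift =
      (Monoid.CoprodI.lift f).comp freeGroupEquivCoprodI.toMonoidHom := by
    ext
    simp [f]
  refine Function.Injective.of_comp (f := Matrix.SpecialLinearGroup.toLin') ?_
  rw [← MonoidHom.coe_comp, hf, MonoidHom.coe_comp]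
  refine Function.Injective.comp ?_ freeGroupEquivCoprodI.injective
  refine Monoid.CoprodI.lift_injective_of_ping_pong f (.inr ⟨0, ?_⟩) domain (fun c => ?_) ?_ ?_
  · rw [FreeGroup.freeGroupUnitEquivInt.cardinal_eq, Cardinal.mk_denumerable]
    exact Cardinal.natCast_le_aleph0
  · refine ⟨![1, c], fun d hd => ?_⟩
    simpa [sub_eq_zero] using hd.symm
  · exact fun c d hcd => Set.disjoint_left.2 fun v hc hd => (hc d hcd.symm).not_gt (hd c hcd)
  · rintro c d hcd h hh _ ⟨v, hv, rfl⟩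
    obtain ⟨n, rfl⟩ := FreeGroup.freeGroupUnitEquivInt.symm.surjective h
    have hn : n ≠ 0 := by
      rintro rfl
      exact hh rfl
    have : f c (FreeGroup.freeGroupUnitEquivInt.symm n) =
        Matrix.SpecialLinearGroup.toLin' (shear c (.ofAdd (4 * n))) := by
      rw [← freeLift_of_zpow]
      simp [f, FreeGroup.freeGroupUnitEquivInt]
    rw [this]
    exact mulVec_mem_domain hcd hn hv

end shear

section Stabilizer

variable {α : Type*} {c : α → ℤ} {κ : α}

/-- The action of a free group on `ℤ²` through powers of transvections. -/
def planeAction (c : α → ℤ) : FreeGroup α →* Matrix.SpecialLinearGroup (Fin 2) ℤ :=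
  shear.freeLift.comp (FreeGroup.map c)

theorem planeAction_of_zpow (a : α) (n : ℤ) :
    planeAction c (.of a ^ n) = shear (c a) (.ofAdd (4 * n)) := by
  rw [planeAction, MonoidHom.comp_apply, map_zpow, FreeGroup.map.of, shear.freeLift_of_zpow]

theorem injective_planeAction (hc : Function.Injective c) :
    Function.Injective (planeAction c) :=
  shear.injective_freeLift.comp (FreeGroup.map_injective hc)

theorem exists_zpow_of_mulVec_eq (hc : Function.Injective c) (hκ : c κ = 0) {g : FreeGroup α}
    (hg : (planeAction c g : Matrix (Fin 2) (Fin 2) ℤ).mulVec ![1, 0] = ![1, 0]) :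
    ∃ k : ℤ, g ^ 4 = .of κ ^ k ∧ (k = 0 → g = 1) := by
  have h := shear.eq_of_mulVec_eq hg
  refine ⟨planeAction c g 0 1, injective_planeAction hc ?_, fun h0 => injective_planeAction hc ?_⟩
  · rw [planeAction_of_zpow, map_pow, hκ]
    conv_lhs => rw [h]
    rw [← map_pow, ← ofAdd_nsmul, nsmul_eq_mul, Nat.cast_ofNat]
  · rw [h, h0, ofAdd_zero, map_one, map_one]

theorem exists_mem_closure_generators_iff {rels : Set (FreeGroup α)} (hc : Function.Injective c)
    (hκ : c κ = 0) {w : FreeGroup α} {P : Prop}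
    (hP : P → Commute (PresentedGroup.mk rels (.of κ)) (PresentedGroup.mk rels w))
    (hnP : ¬ P → ∀ k l : ℤ, PresentedGroup.mk rels w * PresentedGroup.mk rels (.of κ) ^ k =
      PresentedGroup.mk rels (.of κ) ^ l * PresentedGroup.mk rels w → k = 0 ∧ l = 0) :
    (∃ p ∈ Subgroup.closure (FiberProduct.generators rels), p ≠ 1 ∧
      (planeAction c p.1 : Matrix (Fin 2) (Fin 2) ℤ).mulVec
        ((planeAction c w : Matrix (Fin 2) (Fin 2) ℤ).mulVec ![1, 0]) =
          (planeAction c w : Matrix (Fin 2) (Fin 2) ℤ).mulVec ![1, 0] ∧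
      (planeAction c p.2 : Matrix (Fin 2) (Fin 2) ℤ).mulVec ![1, 0] = ![1, 0]) ↔ P := by
  constructor
  · rintro ⟨⟨g, h⟩, hmem, hne, hg, hh⟩
    by_contra hp
    have hg' : (planeAction c (w⁻¹ * g * w) : Matrix (Fin 2) (Fin 2) ℤ).mulVec ![1, 0] =
        ![1, 0] := by
      rw [map_mul, map_mul, Matrix.SpecialLinearGroup.coe_mul, Matrix.SpecialLinearGroup.coe_mul,
        ← Matrix.mulVec_mulVec, ← Matrix.mulVec_mulVec, hg, Matrix.mulVec_mulVec,
        ← Matrix.SpecialLinearGroup.coe_mul, ← map_mul, inv_mul_cancel, map_one,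
        Matrix.SpecialLinearGroup.coe_one, Matrix.one_mulVec]
    obtain ⟨k, hk, hk0⟩ := exists_zpow_of_mulVec_eq hc hκ hg'
    obtain ⟨l, hl, hl0⟩ := exists_zpow_of_mulVec_eq hc hκ hh
    rw [FiberProduct.mem_closure_generators] at hmem
    obtain ⟨rfl, rfl⟩ := hnP hp k l (by
      rw [← map_zpow, ← map_zpow, ← hk, ← hl, map_pow _ h, ← hmem, ← map_pow, ← map_mul,
        ← map_mul]
      simp [pow_succ, mul_assoc])
    refine hne (Prod.ext ?_ (hl0 rfl))
    simpa [mul_assoc, inv_mul_eq_one] using hk0 rfl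
  · intro hp
    refine ⟨(w * .of κ * w⁻¹, .of κ), ?_, fun h => FreeGroup.of_ne_one κ (congrArg Prod.snd h),
      ?_, ?_⟩
    · rw [FiberProduct.mem_closure_generators, map_mul, map_mul, map_inv, (hP hp).symm.eq,
        mul_inv_cancel_right]
    all_goals
      have hfix : (planeAction c (.of κ) : Matrix (Fin 2) (Fin 2) ℤ).mulVec ![1, 0] = ![1, 0] := by
        rw [← zpow_one (FreeGroup.of κ), planeAction_of_zpow, shear.mulVec, hκ]
        simp
    · rw [Matrix.mulVec_mulVec, ← Matrix.SpecialLinearGroup.coe_mul, ← map_mul,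
        inv_mul_cancel_right, map_mul, Matrix.SpecialLinearGroup.coe_mul, ← Matrix.mulVec_mulVec,
        hfix]
    · exact hfix

variable {m n : ℕ}

/-- The embedding of pairs of `2 × 2` matrices in block diagonal form. -/
def blockEmbedding (e : (Fin 2 ⊕ Fin 2) ⊕ Fin m ≃ Fin n) :
    Matrix.SpecialLinearGroup (Fin 2) ℤ × Matrix.SpecialLinearGroup (Fin 2) ℤ →*
      GL (Fin n) ℤ :=
  MonoidHom.toHomUnits
    { toFun p := Matrix.reindexAlgEquiv ℤ ℤ e
        (Matrix.fromBlocks (Matrix.fromBlocks p.1 0 0 p.2) 0 0 1)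
      map_one' := by simp
      map_mul' p q := by
        rw [← map_mul]
        simp [Matrix.fromBlocks_multiply] }

/-- The vector with two given blocks of length two. -/
def blockVector (e : (Fin 2 ⊕ Fin 2) ⊕ Fin m ≃ Fin n) (v w : Fin 2 → ℤ) : Fin n → ℤ :=
  Sum.elim (Sum.elim v w) 0 ∘ e.symm

theorem coe_blockEmbedding (e : (Fin 2 ⊕ Fin 2) ⊕ Fin m ≃ Fin n)
    (p : Matrix.SpecialLinearGroup (Fin 2) ℤ × Matrix.SpecialLinearGroup (Fin 2) ℤ) :
    (blockEmbedding e p : Matrix (Fin n) (Fin n) ℤ) =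
      (Matrix.fromBlocks (Matrix.fromBlocks p.1 0 0 p.2) 0 0 1).submatrix e.symm e.symm := rfl

theorem injective_blockEmbedding (e : (Fin 2 ⊕ Fin 2) ⊕ Fin m ≃ Fin n) :
    Function.Injective (blockEmbedding e) := by
  intro p q h
  have h := congrArg Units.val h
  rw [coe_blockEmbedding, coe_blockEmbedding] at h
  have h := (Matrix.fromBlocks_inj.1 ((Matrix.reindex e e).injective h)).1
  rw [Matrix.fromBlocks_inj] at h
  exact Prod.ext (Subtype.ext h.1) (Subtype.ext h.2.2.2)

theorem blockEmbedding_mulVec (e : (Fin 2 ⊕ Fin 2) ⊕ Fin m ≃ Fin n)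
    (p : Matrix.SpecialLinearGroup (Fin 2) ℤ × Matrix.SpecialLinearGroup (Fin 2) ℤ)
    (v w : Fin 2 → ℤ) :
    (blockEmbedding e p : Matrix (Fin n) (Fin n) ℤ).mulVec (blockVector e v w) =
      blockVector e ((p.1 : Matrix (Fin 2) (Fin 2) ℤ).mulVec v)
        ((p.2 : Matrix (Fin 2) (Fin 2) ℤ).mulVec w) := by
  rw [coe_blockEmbedding, Matrix.submatrix_mulVec_equiv, blockVector, Function.comp_assoc,
    Equiv.symm_symm, Equiv.symm_comp_self, Function.comp_id]
  simp [Matrix.fromBlocks_mulVec, blockVector, Sum.elim_comp_inl]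

theorem blockVector_inj {e : (Fin 2 ⊕ Fin 2) ⊕ Fin m ≃ Fin n} {v v' w w' : Fin 2 → ℤ} :
    blockVector e v w = blockVector e v' w' ↔ v = v' ∧ w = w' := by
  refine ⟨fun h => ⟨funext fun i => ?_, funext fun i => ?_⟩, by rintro ⟨rfl, rfl⟩; rfl⟩
  · simpa [blockVector] using congrFun h (e (.inl (.inl i)))
  · simpa [blockVector] using congrFun h (e (.inl (.inr i)))

end Stabilizer

/-- Integer sequences that are differences of primitive recursive sequences. -/
def IsPrimrecDiff (f : ℕ → ℤ) : Prop :=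
  ∃ a b : ℕ → ℕ, Primrec a ∧ Primrec b ∧ ∀ n, f n = a n - b n

namespace IsPrimrecDiff

variable {f g : ℕ → ℤ}

theorem congr (hf : IsPrimrecDiff f) (h : ∀ n, f n = g n) : IsPrimrecDiff g :=
  funext h ▸ hf

theorem natCast {a : ℕ → ℕ} (ha : Primrec a) : IsPrimrecDiff fun n => a n :=
  ⟨a, fun _ => 0, ha, .const _, fun _ => by simp⟩

theorem const (z : ℤ) : IsPrimrecDiff fun _ => z :=
  ⟨fun _ => z.toNat, fun _ => (-z).toNat, .const _, .const _, fun _ => (z.toNat_sub_toNat_neg).symm⟩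

theorem add (hf : IsPrimrecDiff f) (hg : IsPrimrecDiff g) : IsPrimrecDiff fun n => f n + g n := by
  obtain ⟨a, b, ha, hb, h⟩ := hf
  obtain ⟨a', b', ha', hb', h'⟩ := hg
  refine ⟨fun n => a n + a' n, fun n => b n + b' n, Primrec.nat_add.comp ha ha',
    Primrec.nat_add.comp hb hb', fun n => ?_⟩
  simp only [h, h']
  push_cast
  ring

theorem sub (hf : IsPrimrecDiff f) (hg : IsPrimrecDiff g) : IsPrimrecDiff fun n => f n - g n := by
  obtain ⟨a, b, ha, hb, h⟩ := hg
  refine (hf.add ⟨b, a, hb, ha, fun n => rfl⟩).congr fun n => ?_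
  rw [h]
  ring

theorem mul (hf : IsPrimrecDiff f) (hg : IsPrimrecDiff g) : IsPrimrecDiff fun n => f n * g n := by
  obtain ⟨a, b, ha, hb, h⟩ := hf
  obtain ⟨a', b', ha', hb', h'⟩ := hg
  refine ⟨fun n => a n * a' n + b n * b' n, fun n => a n * b' n + b n * a' n,
    Primrec.nat_add.comp (Primrec.nat_mul.comp ha ha') (Primrec.nat_mul.comp hb hb'),
    Primrec.nat_add.comp (Primrec.nat_mul.comp ha hb') (Primrec.nat_mul.comp hb ha'), fun n => ?_⟩
  simp only [h, h']
  push_cast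
  ring

theorem primrec (hf : IsPrimrecDiff f) : Primrec f := by
  obtain ⟨a, b, ha, hb, h⟩ := hf
  have hencode : Primrec fun n => if b n ≤ a n then 2 * (a n - b n) else 2 * (b n - a n - 1) + 1 :=
    Primrec.ite (Primrec.nat_le.comp hb ha)
      (Primrec.nat_mul.comp (.const 2) (Primrec.nat_sub.comp ha hb))
      (Primrec.succ.comp (Primrec.nat_mul.comp (.const 2)
        (Primrec.nat_sub.comp (Primrec.nat_sub.comp hb ha) (.const 1))))
  refine Primrec.encode_iff.1 (hencode.of_eq fun n => ?_)
  split_ifs with hle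
  · rw [h, ← Nat.cast_sub hle]
    rfl
  · rw [h, show (a n : ℤ) - b n = Int.negSucc (b n - a n - 1) by omega]
    rfl

end IsPrimrecDiff

theorem primrec_blockVector {m n : ℕ} (e : (Fin 2 ⊕ Fin 2) ⊕ Fin m ≃ Fin n) {v : ℕ → Fin 2 → ℤ}
    (hv : ∀ i, IsPrimrecDiff fun k => v k i) (w : Fin 2 → ℤ) :
    Primrec fun k => blockVector e (v k) w := by
  refine Primrec.fin_curry.2 (Primrec₂.swap (Primrec.fin_curry₁.2 fun i => ?_))
  obtain ⟨(i | i) | i, rfl⟩ := e.surjective i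
  · simpa [blockVector, Function.swap] using (hv i).primrec
  · simpa [blockVector, Function.swap] using Primrec.const _
  · simpa [blockVector, Function.swap] using Primrec.const _

theorem isPrimrecDiff_planeAction {α : Type*} (c : α → ℤ) (x t : α) (i : Fin 2) :
    IsPrimrecDiff fun k =>
      (planeAction c (.of x ^ (k : ℤ) * .of t * (.of x ^ (k : ℤ))⁻¹) :
        Matrix (Fin 2) (Fin 2) ℤ).mulVec ![1, 0] i := by
  have hk : IsPrimrecDiff fun k => 4 * k := (IsPrimrecDiff.const 4).mul (.natCast .id)
  have hshear {f : ℕ → ℤ} (hf : IsPrimrecDiff f) {v : ℕ → Fin 2 → ℤ}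
      (hv : ∀ i, IsPrimrecDiff fun k => v k i) (z : ℤ) (i : Fin 2) : IsPrimrecDiff fun k =>
        (shear z (.ofAdd (f k)) : Matrix (Fin 2) (Fin 2) ℤ).mulVec (v k) i := by
    simp only [shear.mulVec]
    have h := hf.mul ((hv 1).sub ((IsPrimrecDiff.const z).mul (hv 0)))
    fin_cases i
    · exact (hv 0).add h
    · exact (hv 1).add (h.mul (.const z))
  have hneg : IsPrimrecDiff fun k => 4 * -(k : ℤ) := by
    simpa using (IsPrimrecDiff.const (-4)).mul (.natCast .id)
  have := hshear hk (hshear (.const 4) (hshear hneg (v := fun _ => ![1, 0])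
    (fun i => .const _) (c x)) (c t)) (c x) i
  refine this.congr fun k => ?_
  rw [Matrix.mulVec_mulVec, Matrix.mulVec_mulVec, ← zpow_neg, map_mul (planeAction c), map_mul (planeAction c),
    planeAction_of_zpow, planeAction_of_zpow, ← zpow_one (FreeGroup.of t), planeAction_of_zpow,
    Matrix.SpecialLinearGroup.coe_mul, Matrix.SpecialLinearGroup.coe_mul]
  rfl

/-- **Undecidability of the stabilizer problem over `ℤ`.**
For `n ≥ 9`, there is no computable function that, given a finite list `X` of
matrices in `GL_n(ℤ)` together with a vector `u ∈ ℤⁿ`, decides whether some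
non-identity element of the subgroup of `GL_n(ℤ)` generated by `X` fixes `u`. -/
theorem stabilizer_problem_undecidable_int (n : ℕ) (hn : 9 ≤ n) :
    ¬ ∃ f : List (Matrix (Fin n) (Fin n) ℤ) × (Fin n → ℤ) → Bool, Computable f ∧
      ∀ (X : List (Matrix (Fin n) (Fin n) ℤ)) (u : Fin n → ℤ),
        (∀ M ∈ X, IsUnit M) →
        (f (X, u) = true ↔
          ∃ g ∈ Subgroup.closure
              {g : GL (Fin n) ℤ | (g : Matrix (Fin n) (Fin n) ℤ) ∈ X},
            g ≠ 1 ∧ (g : Matrix (Fin n) (Fin n) ℤ).mulVec u = u) := by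
  rintro ⟨f, hf, hfX⟩
  obtain ⟨α, _, rels, hrels, x, t, κ, j, P, hj, hPcomp, hP, hnP⟩ := exists_presentation
  obtain ⟨m, ⟨d⟩⟩ := Finite.exists_equiv_fin α
  let c (a : α) : ℤ := (d a : ℤ) - d κ
  have hc : Function.Injective c := fun a b hab => d.injective (Fin.ext (by simpa [c] using hab))
  have hκ : c κ = 0 := sub_self _
  let e : (Fin 2 ⊕ Fin 2) ⊕ Fin (n - 4) ≃ Fin n := Fintype.equivOfCardEq (by simp; omega)
  let Ψ : FreeGroup α × FreeGroup α →* GL (Fin n) ℤ :=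
    (blockEmbedding e).comp ((planeAction c).prodMap (planeAction c))
  have hΨ : Function.Injective Ψ := (injective_blockEmbedding e).comp
    ((injective_planeAction hc).prodMap (injective_planeAction hc))
  let w (k : ℕ) : FreeGroup α := .of x ^ (k : ℤ) * .of t * (.of x ^ (k : ℤ))⁻¹
  let u (k : ℕ) : Fin n → ℤ :=
    blockVector e ((planeAction c (w k) : Matrix (Fin 2) (Fin 2) ℤ).mulVec ![1, 0]) ![1, 0]
  have hu : Primrec u := primrec_blockVector e (isPrimrecDiff_planeAction c x t) _
  have hD := (FiberProduct.finite_generators hrels).image (Units.val ∘ Ψ)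
  let X := hD.toFinset.toList
  have hX : {g : GL (Fin n) ℤ | (g : Matrix (Fin n) (Fin n) ℤ) ∈ X} =
      Ψ '' FiberProduct.generators rels := by
    ext g
    simp only [X, Finset.mem_toList, Set.Finite.mem_toFinset, Set.mem_ofPred_eq, Set.mem_image,
      Function.comp_apply, Units.val_inj]
  have hXunit : ∀ M ∈ X, IsUnit M := by
    intro M hM
    rw [Finset.mem_toList, Set.Finite.mem_toFinset] at hM
    obtain ⟨p, -, rfl⟩ := hM
    exact Units.isUnit _
  refine hPcomp (ComputablePred.computable_iff.2 ⟨fun k => f (X, u (j k)),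
    hf.comp ((Computable.const X).pair (hu.to_comp.comp hj)), funext fun k => propext ?_⟩)
  rw [hfX X _ hXunit, hX, ← MonoidHom.map_closure,
    ← exists_mem_closure_generators_iff hc hκ (hP k) (hnP k)]
  simp only [Subgroup.mem_map, exists_exists_and_eq_and, map_ne_one_iff Ψ hΨ]
  refine exists_congr fun p => and_congr_right fun _ => and_congr_right fun _ => ?_
  rw [MonoidHom.comp_apply, blockEmbedding_mulVec, blockVector_inj]
  rfl
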